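/- Let I be a monomial ideal of R = K[x_1,…,x_n] that is not a principal ideal. Then reg(R/I) ≥ reg(R/sgn(I)). -/

import Mathlib

open MvPolynomial

/-- The monomial ideal of `R = K[x_1,…,x_n]` generated by the monomials `x^{v j}`,
`j = 1, …, q`, with exponent vectors `v j ∈ ℕ^n`. -/
noncomputable def monIdeal (K : Type) [Field K] {n q : ℕ} (v : Fin q → Fin n →₀ ℕ) :
    Ideal (MvPolynomial (Fin n) K) :=
  Ideal.span (Set.range fun j => monomial (v j) (1 : K))

/-- The exponent vectors `v j` are pairwise non-comparable in the componentwise order,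
i.e. the corresponding monomials form an anti-chain under divisibility.  Equivalently,
`{x^{v j}}` is the (unique) minimal monomial generating set `G(I)` of the monomial ideal
`I` it generates. -/
def AntichainFam {n q : ℕ} (v : Fin q → Fin n →₀ ℕ) : Prop :=
  ∀ j k : Fin q, v j ≤ v k → j = k

/-- The signature of the family `v` of exponent vectors (the columns of the incidence
matrix `A`): for each row `i`, the `(i,j)` entry of the signature matrix is the position
of `A i j = v j i` in the ascending list of the distinct entries of the `i`-th row of `A`,
i.e. the number of distinct values in row `i` that are strictly smaller than `v j i`.
The columns of the resulting matrix are the exponent vectors of the generators of the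
signature ideal `sgn(I) = monIdeal K (sgnExp v)`. -/
noncomputable def sgnExp {n q : ℕ} (v : Fin q → Fin n →₀ ℕ) : Fin q → Fin n →₀ ℕ :=
  fun j => Finsupp.equivFunOnFinite.symm fun i =>
    ((Finset.univ.image fun k : Fin q => v k i).filter fun m => m < v j i).card

/-- Basis (index) type of the `k`-th free module `F_k = ⊕_j R(-j)^{b k j}` of a graded
free resolution: a basis element is a pair `(j, t)` where `j` is its degree shift. -/
def resBas (b : ℕ → ℕ → ℕ) (k : ℕ) : Type := Σ j : ℕ, Fin (b k j)

/-- The `R`-linear map `(α →₀ R) → (β →₀ R)` determined by the matrix whose row at the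
basis element `e : α` is `D e`. -/
noncomputable def resMap {R : Type*} [CommRing R] {α β : Type*}
    (D : α → (β →₀ R)) : (α →₀ R) →ₗ[R] (β →₀ R) :=
  Finsupp.linearCombination R D

/-- A minimal graded free resolution `0 → F_g → ⋯ → F_1 → F_0 = R → R/I → 0` of `R/I`
over the standard graded polynomial ring `R = K[x_1,…,x_n]`, where
`F_k = ⊕_j R(-j)^{b k j}`.  The differentials are graded of degree `0`: the matrix entry
from a basis element with shift `j` to one with shift `j'` is homogeneous of degree
`j - j'`; minimality holds since all (nonzero) entries have `j' < j`, hence positive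
degree, i.e. lie in the graded maximal ideal. -/
structure MinFreeRes (K : Type) [Field K] (n : ℕ)
    (I : Ideal (MvPolynomial (Fin n) K)) where
  /-- the length `g` of the resolution -/
  len : ℕ
  /-- the graded Betti numbers: `F_k = ⊕_j R(-j)^{b k j}` -/
  b : ℕ → ℕ → ℕ
  /-- `F_0 = R` (one copy, no shift) -/
  hb0 : ∀ j, b 0 j = if j = 0 then 1 else 0
  /-- the resolution stops at homological degree `len` -/
  htop : ∀ k, len < k → ∀ j, b k j = 0
  /-- there are only finitely many nonzero Betti numbers -/
  hfin : (Function.support fun kj : ℕ × ℕ => b kj.1 kj.2).Finite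
  /-- the matrices of the differentials `d_{k+1} : F_{k+1} → F_k` -/
  D : ∀ k : ℕ, resBas b (k + 1) → (resBas b k →₀ MvPolynomial (Fin n) K)
  /-- gradedness and minimality of the differentials -/
  hhom : ∀ k e e', D k e e' = 0 ∨
    (e'.1 < e.1 ∧ (D k e e').IsHomogeneous (e.1 - e'.1))
  /-- exactness at `F_k` for `k ≥ 1`; taking `k = len` this also forces injectivity of
  the last differential, since `F_k = 0` for `k > len` -/
  hexact : ∀ k, LinearMap.range (resMap (D (k + 1))) = LinearMap.ker (resMap (D k))
  /-- exactness at `F_0`, the augmentation `F_0 = R → R/I` being the quotient map -/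
  hexact0 : LinearMap.range (resMap (D 0)) =
    LinearMap.ker (Finsupp.linearCombination (MvPolynomial (Fin n) K)
      (fun _ : resBas b 0 => (1 : MvPolynomial (Fin n) K ⧸ I)))

/-- The Castelnuovo–Mumford regularity of `R/I`, computed from a minimal graded free
resolution: `reg(R/I) = max { j - k : b k j ≠ 0 }`. -/
noncomputable def MinFreeRes.reg {K : Type} [Field K] {n : ℕ}
    {I : Ideal (MvPolynomial (Fin n) K)} (F : MinFreeRes K n I) : ℤ :=
  sSup { d : ℤ | ∃ k j : ℕ, F.b k j ≠ 0 ∧ d = (j : ℤ) - (k : ℤ) }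

namespace SgnReg

/-- sign -/
def eps {n : ℕ} (S : Finset (Fin n)) (i : Fin n) : ℤ := (-1) ^ (S.filter (· < i)).card

lemma eps_sq {n : ℕ} (S : Finset (Fin n)) (i : Fin n) : eps S i * eps S i = 1 := by
  unfold eps
  rw [← pow_add, ← two_mul, pow_mul]; simp

lemma eps_insert {n : ℕ} (S : Finset (Fin n)) (i l : Fin n) (hi : i ∉ S) :
    eps (insert i S) l = if i < l then - eps S l else eps S l := by
  unfold eps
  rw [Finset.filter_insert]
  split_ifs with h
  · rw [Finset.card_insert_of_notMem (by simp [hi]), pow_succ]; ring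
  · rfl

lemma eps_swap {n : ℕ} (S : Finset (Fin n)) (i l : Fin n) (hi : i ∉ S) (hl : l ∉ S) (h : i ≠ l) :
    eps S i * eps (insert i S) l = - (eps S l * eps (insert l S) i) := by
  rw [eps_insert S i l hi, eps_insert S l i hl]
  rcases lt_or_gt_of_ne h with h | h
  · rw [if_pos h, if_neg (not_lt.2 h.le)]; ring
  · rw [if_pos h, if_neg (not_lt.2 h.le)]; ring

/-- Koszul differential -/
def kos {A M : Type*} [CommRing A] [AddCommGroup M] [Module A M] {n : ℕ} (x : Fin n → A)
    (c : Finset (Fin n) → M) (S : Finset (Fin n)) : M :=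
  ∑ i ∈ Sᶜ, eps S i • x i • c (insert i S)

section
variable {A M N : Type*} [CommRing A] [AddCommGroup M] [Module A M] [AddCommGroup N] [Module A N]
  {n : ℕ} (x : Fin n → A)

lemma kos_sub (c d : Finset (Fin n) → M) : kos x (c - d) = kos x c - kos x d := by
  funext S
  simp [kos, smul_sub, Finset.sum_sub_distrib]

lemma kos_map (φ : M →ₗ[A] N) (c : Finset (Fin n) → M) :
    kos x (fun S => φ (c S)) = fun S => φ (kos x c S) := by
  funext S
  simp [kos]

lemma kos_mem (Z : Submodule A M) (c : Finset (Fin n) → M) (h : ∀ S, c S ∈ Z) (S) :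
    kos x c S ∈ Z := by
  unfold kos
  exact Z.sum_mem fun i _ => zsmul_mem (Z.smul_mem _ (h _)) _

lemma kos_kos (c : Finset (Fin n) → M) : kos x (kos x c) = 0 := by
  funext S
  simp only [kos, Finset.smul_sum, Pi.zero_apply]
  rw [Finset.sum_sigma']
  refine Finset.sum_involution (fun a _ => ⟨a.2, a.1⟩) ?_ ?_ ?_ ?_
  · rintro ⟨i, l⟩ h
    simp only [Finset.mem_sigma, Finset.mem_compl, Finset.mem_insert, not_or] at h
    obtain ⟨hi, hl, hlS⟩ := h
    have e := eps_swap S i l hi hlS (Ne.symm hl)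
    dsimp only
    rw [Finset.insert_comm l i S]
    generalize c (insert i (insert l S)) = m
    rw [smul_comm (x i) (eps (insert i S) l), smul_comm (x l) (eps (insert l S) i), smul_smul,
      smul_smul, smul_smul, smul_smul, e, mul_comm (x i) (x l), neg_smul, neg_add_cancel]
  · rintro ⟨i, l⟩ h _ h2
    simp only [Finset.mem_sigma, Finset.mem_compl, Finset.mem_insert, not_or] at h
    simp only [Sigma.mk.injEq, heq_eq_eq] at h2
    exact h.2.1 h2.1
  · rintro ⟨i, l⟩ h
    simp only [Finset.mem_sigma, Finset.mem_compl, Finset.mem_insert, not_or] at h ⊢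
    exact ⟨h.2.2, fun e => h.2.1 e.symm, h.1⟩
  · rintro ⟨i, l⟩ h
    rfl

end

/-- contraction on the simplex -/
lemma kos_contract {K : Type*} [Field K] {n : ℕ} (a : Finset (Fin n) → K)
    (ha : kos (1 : Fin n → K) a = 0) (i : Fin n) :
    kos (1 : Fin n → K) (fun S => if i ∈ S then eps (S.erase i) i • a (S.erase i) else 0) = a := by
  funext S
  by_cases hi : i ∈ S
  · have h0 := congrFun ha (S.erase i)
    have hS : (S.erase i)ᶜ = insert i Sᶜ := by
      ext l; by_cases h : l = i <;> simp [h]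
    simp only [kos, Pi.zero_apply, Pi.one_apply, one_smul] at h0 ⊢
    rw [hS, Finset.sum_insert (by simpa using hi), Finset.insert_erase hi] at h0
    have : a S = eps (S.erase i) i • (eps (S.erase i) i • a S) := by
      rw [smul_smul, eps_sq, one_smul]
    rw [this, eq_neg_of_add_eq_zero_left h0, smul_neg, Finset.smul_sum, ← Finset.sum_neg_distrib]
    refine Finset.sum_congr rfl fun l hl => ?_
    have hl' : l ∉ S := by simpa using hl
    have hne : l ≠ i := fun e => hl' (e ▸ hi)
    rw [if_pos (by simp [hi]), Finset.erase_insert_of_ne hne, smul_smul, smul_smul, ← neg_smul]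
    congr 1
    have e := eps_swap (S.erase i) l i (by simp [hl']) (by simp) hne
    have hl1 := eps_insert (S.erase i) i l (by simp)
    have hl2 := eps_insert (S.erase i) l i (by simp [hl'])
    rw [Finset.insert_erase hi] at hl1
    rw [hl1, hl2]
    rcases lt_or_gt_of_ne hne with h | h
    · rw [if_pos h, if_neg (not_lt.2 h.le)]; ring
    · rw [if_pos h, if_neg (not_lt.2 h.le)]; ring
  · simp only [kos, Pi.one_apply, one_smul]
    rw [Finset.sum_eq_single i]
    · simp [hi, smul_smul, eps_sq]
      rw [← mul_assoc, ← Int.cast_mul, eps_sq]; simp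
    · intro l _ hl
      rw [if_neg (by simp [hi, Ne.symm hl]), smul_zero]
    · simp [hi]

/-- indicator exponent -/
noncomputable def ind {n : ℕ} (S : Finset (Fin n)) : Fin n →₀ ℕ :=
  Finsupp.equivFunOnFinite.symm fun i => if i ∈ S then 1 else 0

lemma ind_apply {n : ℕ} (S : Finset (Fin n)) (i) : ind S i = if i ∈ S then 1 else 0 := rfl

lemma ind_insert {n : ℕ} (S : Finset (Fin n)) (i) (hi : i ∉ S) :
    ind (insert i S) = Finsupp.single i 1 + ind S := by
  ext l
  by_cases h : l = i
  · subst h; simp [ind_apply, hi]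
  · simp [ind_apply, h, Finsupp.single_apply, Ne.symm h]

lemma ind_degree {n : ℕ} (S : Finset (Fin n)) : (ind S).degree = S.card := by
  rw [Finsupp.degree_eq_sum]
  simp [ind_apply]

section
variable {K : Type*} [Field K] {n : ℕ}

/-- coefficient in multidegree -/
noncomputable def cf (α : Fin n →₀ ℕ) (c : Finset (Fin n) → MvPolynomial (Fin n) K)
    (S : Finset (Fin n)) : K :=
  open Classical in if ind S ≤ α then coeff (α - ind S) (c S) else 0

lemma cf_add (a : Fin n →₀ ℕ) (c : Finset (Fin n) → MvPolynomial (Fin n) K) (S) :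
    cf (a + ind S) c S = coeff a (c S) := by
  simp [cf]

lemma cf_ext (c d : Finset (Fin n) → MvPolynomial (Fin n) K) (h : ∀ α, cf α c = cf α d) :
    c = d := by
  funext S
  ext a
  rw [← cf_add, ← cf_add, h]

lemma cf_ne (α) (c : Finset (Fin n) → MvPolynomial (Fin n) K) (S) (h : cf α c S ≠ 0) :
    ∃ a, α = a + ind S ∧ coeff a (c S) ≠ 0 := by
  unfold cf at h
  split_ifs at h with h1
  · exact ⟨α - ind S, (tsub_add_cancel_of_le h1).symm, h⟩
  · exact absurd rfl h

lemma cf_kos (α) (c : Finset (Fin n) → MvPolynomial (Fin n) K) :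
    cf α (kos (A := MvPolynomial (Fin n) K) X c) = kos (A := K) 1 (cf α c) := by
  funext S
  by_cases h : ind S ≤ α
  · obtain ⟨a, rfl⟩ := exists_add_of_le h
    rw [add_comm, cf_add]
    simp only [kos, coeff_sum, Pi.one_apply, one_smul]
    refine Finset.sum_congr rfl fun i hi => ?_
    have hi' : i ∉ S := by simpa using hi
    rw [← lcoeff_apply (R := K), map_zsmul, lcoeff_apply, smul_eq_mul, mul_comm]
    congr 1
    by_cases hc : 1 ≤ a i
    · obtain ⟨a', rfl⟩ : ∃ a', a = a' + Finsupp.single i 1 :=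
        ⟨a - Finsupp.single i 1, (tsub_add_cancel_of_le (by simpa using hc)).symm⟩
      rw [coeff_mul_X, add_assoc, ← ind_insert S i hi', cf_add]
    · rw [coeff_mul_X', if_neg (by simp; omega)]
      unfold cf
      rw [if_neg]
      intro hle
      have := hle i
      simp [ind_apply, hi'] at this
      omega
  · rw [cf, if_neg h]
    symm
    simp only [kos, Pi.one_apply, one_smul]
    refine Finset.sum_eq_zero fun i hi => ?_
    have hi' : i ∉ S := by simpa using hi
    rw [cf, if_neg, smul_zero]
    intro h2
    rw [ind_insert S i hi'] at h2
    exact h (le_trans le_add_self h2)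

lemma cf_assemble (A : (Fin n →₀ ℕ) → Finset (Fin n) → K) (T : Finset (Fin n →₀ ℕ))
    (hA : ∀ α S, A α S ≠ 0 → ind S ≤ α ∧ α ∈ T) :
    ∃ c : Finset (Fin n) → MvPolynomial (Fin n) K, ∀ α, cf α c = A α := by
  classical
  refine ⟨fun S => ∑ α ∈ T, if ind S ≤ α then monomial (α - ind S) (A α S) else 0, fun α => ?_⟩
  funext S
  unfold cf
  split_ifs with h
  · rw [coeff_sum]
    by_cases hT : α ∈ T
    · rw [Finset.sum_eq_single_of_mem α hT, if_pos h, coeff_monomial, if_pos rfl]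
      intro β _ hβ
      split_ifs with h2
      · rw [coeff_monomial, if_neg]
        intro h3
        apply hβ
        rw [← tsub_add_cancel_of_le h2, h3, tsub_add_cancel_of_le h]
      · simp
    · rw [Finset.sum_eq_zero]
      · by_contra h2
        exact hT (hA α S (Ne.symm h2)).2
      · intro β hβT
        have hβ : β ≠ α := fun e => hT (e ▸ hβT)
        split_ifs with h2
        · rw [coeff_monomial, if_neg]
          intro h3
          apply hβ
          rw [← tsub_add_cancel_of_le h2, h3, tsub_add_cancel_of_le h]
        · simp
  · by_contra h2
    exact h (hA α S (Ne.symm h2)).1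

lemma cf_finite (c : Finset (Fin n) → MvPolynomial (Fin n) K) :
    ∃ T : Finset (Fin n →₀ ℕ), ∀ α, α ∉ T → cf α c = 0 := by
  classical
  refine ⟨Finset.univ.biUnion fun S => (c S).support.image (· + ind S), fun α hα => ?_⟩
  funext S
  by_contra h
  obtain ⟨a, rfl, h2⟩ := cf_ne α c S h
  apply hα
  simp only [Finset.mem_biUnion, Finset.mem_univ, true_and, Finset.mem_image]
  exact ⟨S, a, by simpa using h2, rfl⟩

/-- multigraded chains -/
def PU (U : Set (Fin n →₀ ℕ)) (α : Fin n →₀ ℕ) (p : ℕ) (a : Finset (Fin n) → K) : Prop :=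
  ∀ S, a S ≠ 0 → S.card = p ∧ ∃ u ∈ U, u + ind S = α

/-- graded chains -/
def CR (U : Set (Fin n →₀ ℕ)) (p j : ℕ) (c : Finset (Fin n) → MvPolynomial (Fin n) K) : Prop :=
  ∀ S a, coeff a (c S) ≠ 0 → a ∈ U ∧ S.card = p ∧ a.degree + p = j

lemma CR_PU {U : Set (Fin n →₀ ℕ)} {p j : ℕ} {c : Finset (Fin n) → MvPolynomial (Fin n) K}
    (h : CR U p j c) (α) : PU U α p (cf α c) := by
  intro S hS
  obtain ⟨a, rfl, h2⟩ := cf_ne α c S hS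
  obtain ⟨h3, h4, h5⟩ := h S a h2
  exact ⟨h4, a, h3, rfl⟩

lemma CR_of {U : Set (Fin n →₀ ℕ)} {p j : ℕ} {c : Finset (Fin n) → MvPolynomial (Fin n) K}
    (h : ∀ α, PU U α p (cf α c)) (h' : ∀ α, cf α c ≠ 0 → α.degree = j) : CR U p j c := by
  intro S a ha
  rw [← cf_add] at ha
  obtain ⟨h1, u, hu, h2⟩ := h _ S ha
  have h3 := h' (a + ind S) (fun e => ha (by rw [e]; rfl))
  rw [map_add, ind_degree, h1] at h3
  rw [add_right_cancel h2] at hu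
  exact ⟨hu, h1, h3⟩

lemma glue {U : Set (Fin n →₀ ℕ)} {p j : ℕ} {c : Finset (Fin n) → MvPolynomial (Fin n) K}
    (h : CR U p j c)
    (hb : ∀ α : Fin n →₀ ℕ, α.degree = j → ∃ b, PU U α (p + 1) b ∧ kos (A := K) 1 b = cf α c) :
    ∃ b, CR U (p + 1) j b ∧ kos (A := MvPolynomial (Fin n) K) X b = c := by
  classical
  choose! B hB1 hB2 using hb
  obtain ⟨T, hT⟩ := cf_finite c
  have kz : kos (1 : Fin n → K) (0 : Finset (Fin n) → K) = 0 := by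
    funext S; simp [kos]
  obtain ⟨b, hbb⟩ := cf_assemble (fun α => if α ∈ T ∧ α.degree = j then B α else 0) T (by
    intro α S hS
    split_ifs at hS with h1
    · obtain ⟨_, u, _, rfl⟩ := hB1 α h1.2 S hS
      exact ⟨le_add_self, h1.1⟩
    · exact absurd rfl hS)
  refine ⟨b, CR_of (fun α => ?_) (fun α => ?_), cf_ext _ _ fun α => ?_⟩
  · rw [hbb]
    split_ifs with h1
    · exact hB1 α h1.2
    · intro S hS; exact absurd rfl hS
  · rw [hbb]
    split_ifs with h1
    · intro _; exact h1.2
    · intro hS; exact absurd rfl hS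
  · rw [cf_kos, hbb]
    split_ifs with h1
    · exact hB2 α h1.2
    · rw [kz]
      by_contra h3
      apply h1
      constructor
      · by_contra h4
        exact h3 (hT α h4).symm
      · obtain ⟨S, hS⟩ := Function.ne_iff.1 (Ne.symm h3)
        obtain ⟨a, rfl, h5⟩ := cf_ne _ _ _ hS
        obtain ⟨_, h6, h7⟩ := h S a h5
        rw [map_add, ind_degree, h6, h7]

/-- nonvanishing of Koszul homology in degree `j` -/
def NR (K : Type*) [Field K] {n : ℕ} (U : Set (Fin n →₀ ℕ)) (p j : ℕ) : Prop :=
  ∃ c : Finset (Fin n) → MvPolynomial (Fin n) K, CR U p j c ∧ kos (A := MvPolynomial (Fin n) K) X c = 0 ∧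
    ∀ b, CR U (p + 1) j b → kos (A := MvPolynomial (Fin n) K) X b ≠ c

/-- nonvanishing of multigraded Koszul homology -/
def NK (K : Type*) [Field K] {n : ℕ} (U : Set (Fin n →₀ ℕ)) (α : Fin n →₀ ℕ) (p : ℕ) : Prop :=
  ∃ a : Finset (Fin n) → K, PU U α p a ∧ kos (A := K) 1 a = 0 ∧
    ∀ b, PU U α (p + 1) b → kos (A := K) 1 b ≠ a

lemma NR_NK (U : Set (Fin n →₀ ℕ)) (p j : ℕ) (h : NR K U p j) :
    ∃ α : Fin n →₀ ℕ, α.degree = j ∧ NK K U α p := by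
  obtain ⟨c, h1, h2, h3⟩ := h
  by_contra! hc
  obtain ⟨b, hb1, hb2⟩ := glue h1 (by
    intro α hα
    by_contra! h4
    refine hc α hα ⟨cf α c, CR_PU h1 α, ?_, h4⟩
    rw [← cf_kos, h2]
    funext S; simp [cf])
  exact h3 b hb1 hb2

lemma NK_NR (U : Set (Fin n →₀ ℕ)) (p : ℕ) (α : Fin n →₀ ℕ) (h : NK K U α p) :
    NR K U p α.degree := by
  classical
  obtain ⟨a, h1, h2, h3⟩ := h
  have kz : kos (1 : Fin n → K) (0 : Finset (Fin n) → K) = 0 := by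
    funext S; simp [kos]
  obtain ⟨c, hc⟩ := cf_assemble (fun β => if β = α then a else 0) {α} (by
    intro β S hS
    split_ifs at hS with h4
    · obtain ⟨_, u, _, h5⟩ := h1 S hS
      subst h4
      exact ⟨h5 ▸ le_add_self, by simp⟩
    · exact absurd rfl hS)
  refine ⟨c, CR_of (fun β => ?_) (fun β => ?_), cf_ext _ _ fun β => ?_, fun b hb e => ?_⟩
  · rw [hc]
    split_ifs with h4
    · exact h4 ▸ h1
    · intro S hS; exact absurd rfl hS
  · rw [hc]
    split_ifs with h4
    · intro _; rw [h4]
    · intro hS; exact absurd rfl hS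
  · rw [cf_kos, hc]
    have : cf β (0 : Finset (Fin n) → MvPolynomial (Fin n) K) = 0 := by funext S; simp [cf]
    rw [this]
    split_ifs
    · exact h2
    · exact kz
  · apply h3 (cf α b) (CR_PU hb α)
    rw [← cf_kos, e, hc, if_pos rfl]

lemma acyclic (p j : ℕ) (c : Finset (Fin n) → MvPolynomial (Fin n) K) (h : CR Set.univ p j c)
    (hk : kos (A := MvPolynomial (Fin n) K) X c = 0) (h0 : coeff 0 (c ∅) = 0) :
    ∃ b, CR Set.univ (p + 1) j b ∧ kos (A := MvPolynomial (Fin n) K) X b = c := by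
  refine glue h fun α _ => ?_
  have hα := CR_PU h α
  by_cases hz : α = 0
  · refine ⟨0, fun S hS => absurd rfl hS, ?_⟩
    funext S
    have : kos (1 : Fin n → K) (0 : Finset (Fin n) → K) S = 0 := by simp [kos]
    rw [this]
    by_contra hS
    obtain ⟨a, h1, h2⟩ := cf_ne _ _ _ (Ne.symm hS)
    rw [hz] at h1
    have h3 : a = 0 := by
      ext i; have := DFunLike.congr_fun h1 i; simp at this; simp; omega
    have h4 : S = ∅ := by
      ext i
      have := DFunLike.congr_fun h1 i
      by_cases hi : i ∈ S
      · simp [ind_apply, hi] at this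
      · simp [hi]
    subst h3 h4
    exact h2 h0
  · obtain ⟨i, hi⟩ := Finsupp.ne_iff.1 hz
    refine ⟨_, ?_, kos_contract (cf α c) ?_ i⟩
    · intro S hS
      dsimp only at hS
      split_ifs at hS with hiS
      · obtain ⟨h1, u, _, h2⟩ := hα (S.erase i) (fun e => hS (by rw [e, smul_zero]))
        refine ⟨by rw [← Finset.card_erase_add_one hiS, h1], α - ind S, trivial, ?_⟩
        apply tsub_add_cancel_of_le
        intro l
        by_cases hl : l = i
        · subst hl; simp [ind_apply, hiS]; simp at hi; omega
        · rw [← h2]; simp [ind_apply, hl]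
      · exact absurd rfl hS
    · rw [← cf_kos, hk]; funext S; simp [cf]

end

lemma row_lemma (V : Finset ℕ) (β : ℕ) : ∃ α, β ≤ α ∧ ∀ v ∈ V,
    ((V.filter (· < v)).card ≤ β ↔ v ≤ α) ∧ ((V.filter (· < v)).card + 1 ≤ β ↔ v + 1 ≤ α) := by
  have mono : ∀ u ∈ V, ∀ v, u < v → (V.filter (· < u)).card < (V.filter (· < v)).card := by
    intro u hu v huv
    apply Finset.card_lt_card
    rw [Finset.ssubset_iff_of_subset]
    · exact ⟨u, by simp [hu, huv], by simp⟩
    · intro w; simp; intro h1 h2; exact ⟨h1, h2.trans huv⟩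
  have lt : ∀ v ∈ V, (V.filter (· < v)).card < V.card := by
    intro v hv
    apply Finset.card_lt_card
    rw [Finset.ssubset_iff_of_subset (Finset.filter_subset _ _)]
    exact ⟨v, hv, by simp⟩
  rcases lt_or_ge β V.card with h | h
  · obtain ⟨α, hα, h2⟩ : ∃ α ∈ V, (V.filter (· < α)).card = β := by
      have := Finset.surjOn_of_injOn_of_card_le (s := V) (t := Finset.range V.card)
        (fun v => (V.filter (· < v)).card) (by intro v hv; simpa using lt v hv) (by
          intro u hu v hv e
          rcases lt_trichotomy u v with h1 | h1 | h1
          · exact absurd e (mono u hu v h1).ne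
          · exact h1
          · exact absurd e (mono v hv u h1).ne') (by simp)
      obtain ⟨a, ha, h3⟩ := this (show β ∈ _ by simpa using h)
      exact ⟨a, ha, h3⟩
    refine ⟨α, ?_, fun v hv => ?_⟩
    · rw [← h2]
      calc _ ≤ (Finset.range α).card := Finset.card_le_card (by intro w; simp)
        _ = α := by simp
    · rcases lt_trichotomy v α with h1 | h1 | h1
      · have := mono v hv α h1; constructor <;> omega
      · subst h1; constructor <;> omega
      · have := mono α hα v h1; constructor <;> omega
  · refine ⟨β + V.sup id + 1, by omega, fun v hv => ?_⟩
    have := lt v hv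
    have h3 : v ≤ V.sup id := Finset.le_sup (f := id) hv
    constructor <;> omega

/-- exponents in the monomial ideal -/
def UI {n q : ℕ} (v : Fin q → Fin n →₀ ℕ) : Set (Fin n →₀ ℕ) := {a | ∃ j, v j ≤ a}

lemma mem_iff {n q : ℕ} (v : Fin q → Fin n →₀ ℕ) (S : Finset (Fin n)) (α : Fin n →₀ ℕ) :
    (∃ u ∈ UI v, u + ind S = α) ↔ ∃ j, ∀ i, v j i + ind S i ≤ α i := by
  constructor
  · rintro ⟨u, ⟨j, hj⟩, rfl⟩
    exact ⟨j, fun i => by simpa using hj i⟩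
  · rintro ⟨j, hj⟩
    refine ⟨α - ind S, ⟨j, fun i => ?_⟩, tsub_add_cancel_of_le fun i => ?_⟩
    · have := hj i; simp; omega
    · have := hj i; omega

lemma transfer {K : Type*} [Field K] {n q : ℕ} (v : Fin q → Fin n →₀ ℕ) (p j : ℕ)
    (h : NR K (UI (sgnExp v)) p j) : ∃ j', j ≤ j' ∧ NR K (UI v) p j' := by
  obtain ⟨β, rfl, hβ⟩ := NR_NK _ _ _ h
  choose A hA1 hA2 using fun i => row_lemma (Finset.univ.image fun k : Fin q => v k i) (β i)
  let α : Fin n →₀ ℕ := Finsupp.equivFunOnFinite.symm A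
  have hP : ∀ p (a : Finset (Fin n) → K), PU (UI (sgnExp v)) β p a ↔ PU (UI v) α p a := by
    intro p a
    unfold PU
    have : ∀ S, (∃ u ∈ UI (sgnExp v), u + ind S = β) ↔ (∃ u ∈ UI v, u + ind S = α) := by
      intro S
      rw [mem_iff, mem_iff]
      refine exists_congr fun k => forall_congr' fun i => ?_
      have := hA2 i (v k i) (by simp)
      change (_ + _ ≤ _) ↔ v k i + _ ≤ A i
      rw [ind_apply]
      split_ifs
      · exact this.2
      · exact this.1
    simp only [this]
  refine ⟨α.degree, ?_, NK_NR _ _ _ ?_⟩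
  · rw [Finsupp.degree_eq_sum, Finsupp.degree_eq_sum]
    exact Finset.sum_le_sum fun i _ => hA1 i
  · obtain ⟨a, h1, h2, h3⟩ := hβ
    exact ⟨a, (hP _ _).1 h1, h2, fun b hb => h3 b ((hP _ _).2 hb)⟩

section
variable {K : Type*} [Field K] {n : ℕ} {ι κ : Type*}

/-- graded chains in a free module -/
def HC (deg : ι → ℕ) (p j : ℕ) (c : Finset (Fin n) → (ι →₀ MvPolynomial (Fin n) K)) : Prop :=
  ∀ S e a, coeff a (c S e) ≠ 0 → S.card = p ∧ a.degree + deg e + p = j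

/-- nonvanishing of the Koszul homology of a submodule of a free module -/
def NF (deg : ι → ℕ) (Z : Submodule (MvPolynomial (Fin n) K) (ι →₀ MvPolynomial (Fin n) K))
    (p j : ℕ) : Prop :=
  ∃ c : Finset (Fin n) → (ι →₀ MvPolynomial (Fin n) K), (∀ S, c S ∈ Z) ∧ HC deg p j c ∧
    kos (A := MvPolynomial (Fin n) K) X c = 0 ∧
    ∀ b : Finset (Fin n) → (ι →₀ MvPolynomial (Fin n) K), (∀ S, b S ∈ Z) → HC deg (p + 1) j b →
      kos (A := MvPolynomial (Fin n) K) X b ≠ c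

/-- graded maps -/
def Gr (deg : ι → ℕ) (deg' : κ → ℕ)
    (φ : (ι →₀ MvPolynomial (Fin n) K) →ₗ[MvPolynomial (Fin n) K] (κ →₀ MvPolynomial (Fin n) K)) :
    Prop :=
  ∀ (P : ℕ → Prop) f, (∀ e a, coeff a (f e) ≠ 0 → P (a.degree + deg e)) →
    ∀ e a, coeff a (φ f e) ≠ 0 → P (a.degree + deg' e)

variable {deg : ι → ℕ} {deg' : κ → ℕ}
  {φ : (ι →₀ MvPolynomial (Fin n) K) →ₗ[MvPolynomial (Fin n) K] (κ →₀ MvPolynomial (Fin n) K)}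

lemma HC_map (hφ : Gr deg deg' φ) {p j : ℕ} {c : Finset (Fin n) → (ι →₀ MvPolynomial (Fin n) K)}
    (h : HC deg p j c) : HC deg' p j (fun S => φ (c S)) := by
  intro S
  exact hφ (fun d => S.card = p ∧ d + p = j) (c S) (fun e a => h S e a)

lemma HC_sub {p j : ℕ} {c d : Finset (Fin n) → (ι →₀ MvPolynomial (Fin n) K)}
    (h : HC deg p j c) (h' : HC deg p j d) : HC deg p j (c - d) := by
  intro S e a ha
  by_cases hc : coeff a (c S e) = 0
  · refine h' S e a fun hd => ha ?_
    simp [hc, hd]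
  · exact h S e a hc

lemma HC_kos {p j : ℕ} {c : Finset (Fin n) → (ι →₀ MvPolynomial (Fin n) K)}
    (h : HC deg (p + 1) j c) : HC deg p j (kos (A := MvPolynomial (Fin n) K) X c) := by
  classical
  intro S e a ha
  have e1 := congrFun (kos_map (A := MvPolynomial (Fin n) K) X
    (Finsupp.lapply (R := MvPolynomial (Fin n) K) e) c) S
  simp only [Finsupp.lapply_apply] at e1
  rw [← e1] at ha
  simp only [kos, coeff_sum] at ha
  obtain ⟨i, hi, h2⟩ := Finset.exists_ne_zero_of_sum_ne_zero ha
  have hi' : i ∉ S := by simpa using hi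
  rw [← lcoeff_apply (R := K), map_zsmul, lcoeff_apply, smul_eq_mul, mul_comm] at h2
  have h3 := right_ne_zero_of_smul h2
  rw [coeff_mul_X'] at h3
  split_ifs at h3 with h4
  · obtain ⟨h5, h6⟩ := h _ _ _ h3
    rw [Finset.card_insert_of_notMem hi'] at h5
    have h7 : (a - Finsupp.single i 1) + Finsupp.single i 1 = a :=
      tsub_add_cancel_of_le (by simp at h4 ⊢; omega)
    have h8 := congrArg Finsupp.degree h7
    rw [map_add, Finsupp.degree_single] at h8
    exact ⟨by omega, by omega⟩
  · exact absurd rfl h3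

lemma free_acyclic [Finite ι] {p j : ℕ} {c : Finset (Fin n) → (ι →₀ MvPolynomial (Fin n) K)}
    (h : HC deg p j c) (hk : kos (A := MvPolynomial (Fin n) K) X c = 0)
    (h0 : ∀ e, coeff 0 (c ∅ e) = 0) :
    ∃ b, HC deg (p + 1) j b ∧ kos (A := MvPolynomial (Fin n) K) X b = c := by
  have key : ∀ e, ∃ b, CR Set.univ (p + 1) (j - deg e) b ∧
      kos (A := MvPolynomial (Fin n) K) X b = fun S => c S e := by
    intro e
    refine acyclic p (j - deg e) (fun S => c S e) ?_ ?_ (h0 e)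
    · intro S a ha
      obtain ⟨h1, h2⟩ := h S e a ha
      exact ⟨trivial, h1, by omega⟩
    · have e1 := kos_map (A := MvPolynomial (Fin n) K) X
        (Finsupp.lapply (R := MvPolynomial (Fin n) K) e) c
      simp only [Finsupp.lapply_apply] at e1
      rw [e1, hk]; rfl
  choose B hB1 hB2 using key
  refine ⟨fun S => Finsupp.equivFunOnFinite.symm fun e => B e S, ?_, ?_⟩
  · intro S e a ha
    obtain ⟨_, h1, h2⟩ := hB1 e S a ha
    exact ⟨h1, by omega⟩
  · funext S
    ext1 e
    have e1 := congrFun (kos_map (A := MvPolynomial (Fin n) K) X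
      (Finsupp.lapply (R := MvPolynomial (Fin n) K) e)
        (fun S => Finsupp.equivFunOnFinite.symm fun e => B e S)) S
    simp only [Finsupp.lapply_apply] at e1
    rw [← e1]
    exact congrFun (hB2 e) S

lemma HC_lift [Finite ι] (hφ : Gr deg deg' φ) {p j : ℕ}
    {c : Finset (Fin n) → (κ →₀ MvPolynomial (Fin n) K)}
    (h : HC deg' p j c) (hr : ∀ S, c S ∈ LinearMap.range φ) :
    ∃ c', HC deg p j c' ∧ (fun S => φ (c' S)) = c := by
  classical
  choose f hf using hr
  have filt : ∀ (Q : (Fin n →₀ ℕ) → Prop) (g : MvPolynomial (Fin n) K),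
      ∃ g' : MvPolynomial (Fin n) K, ∀ a, coeff a g' = if Q a then coeff a g else 0 := by
    intro Q g
    refine ⟨∑ a ∈ g.support.filter Q, monomial a (coeff a g), fun a => ?_⟩
    simp only [coeff_sum, coeff_monomial, Finset.sum_ite_eq', Finset.mem_filter, mem_support_iff]
    by_cases h1 : Q a <;> by_cases h2 : coeff a g = 0 <;> simp [h1, h2]
  choose g hg using fun S e =>
    filt (fun a => S.card = p ∧ a.degree + deg e + p = j) (f S e)
  let c' : Finset (Fin n) → (ι →₀ MvPolynomial (Fin n) K) :=
    fun S => Finsupp.equivFunOnFinite.symm fun e => g S e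
  have hc' : ∀ S e, c' S e = g S e := fun _ _ => rfl
  have h1 : HC deg p j c' := by
    intro S e a ha
    rw [hc', hg] at ha
    by_contra h2
    rw [if_neg h2] at ha
    exact ha rfl
  refine ⟨c', h1, ?_⟩
  have h2 := HC_map hφ h1
  funext S
  ext e a
  have h3 : ∀ e a, coeff a (φ (f S - c' S) e) ≠ 0 →
      ¬ (S.card = p ∧ a.degree + deg' e + p = j) := by
    refine hφ (fun d => ¬ (S.card = p ∧ d + p = j)) (f S - c' S) ?_
    intro e a ha hh
    apply ha
    rw [Finsupp.sub_apply, coeff_sub, hc', hg, if_pos hh, sub_self]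
  have h4 : coeff a (c S e) = coeff a (φ (c' S) e) + coeff a (φ (f S - c' S) e) := by
    rw [map_sub, Finsupp.sub_apply, coeff_sub, hf]; ring
  by_cases h5 : S.card = p ∧ a.degree + deg' e + p = j
  · have : coeff a (φ (f S - c' S) e) = 0 := by
      by_contra h6
      exact h3 e a h6 h5
    rw [h4, this, add_zero]
  · have h6 : coeff a (c S e) = 0 := by
      by_contra h7
      exact h5 (h S e a h7)
    have h8 : coeff a (φ (c' S) e) = 0 := by
      by_contra h7
      exact h5 (h2 S e a h7)
    rw [h6, h8]

lemma HC_empty {p j : ℕ} {c : Finset (Fin n) → (ι →₀ MvPolynomial (Fin n) K)}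
    (h : HC deg (p + 1) j c) (e) : coeff 0 (c ∅ e) = 0 := by
  by_contra h1
  have := (h ∅ e 0 h1).1
  simp at this

lemma step_down [Finite ι] (hφ : Gr deg deg' φ) {p j : ℕ}
    (h : NF deg' (LinearMap.range φ) (p + 1) j) : NF deg (LinearMap.ker φ) p j := by
  obtain ⟨c, h1, h2, h3, h4⟩ := h
  obtain ⟨c', h5, h6⟩ := HC_lift hφ h2 h1
  have hkm : ∀ d : Finset (Fin n) → (ι →₀ MvPolynomial (Fin n) K), _ :=
    fun d => kos_map (A := MvPolynomial (Fin n) K) X φ d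
  refine ⟨kos (A := MvPolynomial (Fin n) K) X c', ?_, HC_kos h5, kos_kos _ _, ?_⟩
  · intro S
    have := congrFun (hkm c') S
    rw [h6, h3] at this
    exact this.symm
  · intro b hb1 hb2 hb3
    obtain ⟨d, hd1, hd2⟩ := free_acyclic (HC_sub h5 hb2)
      (by rw [kos_sub, hb3, sub_self]) (HC_empty (HC_sub h5 hb2))
    refine h4 (fun S => φ (d S)) (fun S => ⟨_, rfl⟩) (HC_map hφ hd1) ?_
    rw [hkm, hd2, ← h6]
    funext S
    have : φ (b S) = 0 := hb1 S
    simp [this]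

lemma step_up [Finite ι] (hφ : Gr deg deg' φ) {p j : ℕ}
    (hmin : ∀ f ∈ LinearMap.ker φ, ∀ e, coeff 0 (f e) = 0)
    (h : NF deg (LinearMap.ker φ) p j) : NF deg' (LinearMap.range φ) (p + 1) j := by
  obtain ⟨z, h1, h2, h3, h4⟩ := h
  obtain ⟨w, hw1, hw2⟩ := free_acyclic h2 h3 (hmin _ (h1 ∅))
  have hkm : ∀ d : Finset (Fin n) → (ι →₀ MvPolynomial (Fin n) K), _ :=
    fun d => kos_map (A := MvPolynomial (Fin n) K) X φ d
  refine ⟨fun S => φ (w S), fun S => ⟨_, rfl⟩, HC_map hφ hw1, ?_, ?_⟩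
  · rw [hkm, hw2]
    funext S
    exact h1 S
  · intro u hu1 hu2 hu3
    obtain ⟨u', h5, h6⟩ := HC_lift hφ hu2 hu1
    refine h4 (w - kos (A := MvPolynomial (Fin n) K) X u') ?_ (HC_sub hw1 (HC_kos h5)) ?_
    · intro S
      have := congrFun (hkm u') S
      rw [h6, hu3] at this
      rw [LinearMap.mem_ker, Pi.sub_apply, map_sub, ← this, sub_self]
    · rw [kos_sub, kos_kos, sub_zero, hw2]

lemma base_down [Finite ι] (hφ : Gr deg deg' φ) {j : ℕ}
    (h : NF deg' (LinearMap.range φ) 0 j) : ∃ e, deg e = j := by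
  obtain ⟨c, h1, h2, h3, h4⟩ := h
  by_contra! hne
  obtain ⟨c', h5, h6⟩ := HC_lift hφ h2 h1
  have hkm : ∀ d : Finset (Fin n) → (ι →₀ MvPolynomial (Fin n) K), _ :=
    fun d => kos_map (A := MvPolynomial (Fin n) K) X φ d
  obtain ⟨d, hd1, hd2⟩ := free_acyclic h5 (by
    funext S
    ext e a
    by_contra h7
    rw [← ne_eq] at h7
    -- all sets in a nonzero term have cardinality at least one
    have hz : kos (A := MvPolynomial (Fin n) K) X c' S = 0 := by
      unfold kos
      refine Finset.sum_eq_zero fun i _ => ?_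
      have : c' (insert i S) = 0 := by
        ext e a
        by_contra h8
        have := (h5 _ e a h8).1
        simp at this
      rw [this, smul_zero, smul_zero]
    rw [hz] at h7
    exact h7 rfl) (by
    intro e
    by_contra h7
    have := (h5 ∅ e 0 h7).2
    simp at this
    exact hne e this)
  refine h4 (fun S => φ (d S)) (fun S => ⟨_, rfl⟩) (HC_map hφ hd1) ?_
  rw [hkm, hd2, ← h6]

lemma base_up [Finite ι] (hφ : Gr deg deg' φ) {j : ℕ}
    (hmin : ∀ f ∈ LinearMap.ker φ, ∀ e, coeff 0 (f e) = 0)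
    (h : ∃ e, deg e = j) : NF deg' (LinearMap.range φ) 0 j := by
  classical
  obtain ⟨e, he⟩ := h
  let f : Finset (Fin n) → (ι →₀ MvPolynomial (Fin n) K) :=
    fun S => if S = ∅ then Finsupp.single e 1 else 0
  have hf : HC deg 0 j f := by
    intro S e' a ha
    by_cases hS : S = ∅
    · simp only [f, hS, if_true, Finsupp.single_apply] at ha
      split_ifs at ha with h1
      · rw [coeff_one] at ha
        split_ifs at ha with h2
        · subst h1 h2
          simp [hS, he]
        · exact absurd rfl ha
      · simp at ha
    · simp [f, hS] at ha
  have hkm : ∀ d : Finset (Fin n) → (ι →₀ MvPolynomial (Fin n) K), _ :=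
    fun d => kos_map (A := MvPolynomial (Fin n) K) X φ d
  refine ⟨fun S => φ (f S), fun S => ⟨_, rfl⟩, HC_map hφ hf, ?_, ?_⟩
  · funext S
    simp [kos, f]
  · intro u hu1 hu2 hu3
    obtain ⟨u', h5, h6⟩ := HC_lift hφ hu2 hu1
    have h7 : f ∅ - kos (A := MvPolynomial (Fin n) K) X u' ∅ ∈ LinearMap.ker φ := by
      have := congrFun (hkm u') ∅
      rw [h6, hu3] at this
      rw [LinearMap.mem_ker, map_sub, ← this, sub_self]
    have h8 := hmin _ h7 e
    have e1 := congrFun (kos_map (A := MvPolynomial (Fin n) K) X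
      (Finsupp.lapply (R := MvPolynomial (Fin n) K) e) u') ∅
    simp only [Finsupp.lapply_apply] at e1
    have h9 : coeff 0 (kos (A := MvPolynomial (Fin n) K) X u' ∅ e) = 0 := by
      rw [← e1]
      simp only [kos, coeff_sum]
      refine Finset.sum_eq_zero fun i _ => ?_
      rw [← lcoeff_apply (R := K), map_zsmul, lcoeff_apply, smul_eq_mul, mul_comm, coeff_mul_X']
      simp
    rw [Finsupp.sub_apply, coeff_sub, h9] at h8
    simp [f] at h8

end

section
variable {K : Type} [Field K] {n : ℕ} {I : Ideal (MvPolynomial (Fin n) K)} (F : MinFreeRes K n I)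

lemma fin_bas (k : ℕ) : Finite (resBas F.b k) := by
  have : Finite {j // F.b k j ≠ 0} := by
    refine Set.Finite.to_subtype (s := {j | F.b k j ≠ 0}) ?_
    exact F.hfin.preimage (f := fun j => (k, j)) (by intro a _ b _ h; simpa using h)
  refine Finite.of_injective (β := Σ j : {j // F.b k j ≠ 0}, Fin (F.b k j))
    (fun e => ⟨⟨e.1, fun h => (Fin.cast h e.2).elim0⟩, e.2⟩) ?_
  rintro ⟨a, s⟩ ⟨b, t⟩ h
  simp only [Sigma.mk.injEq, Subtype.mk.injEq] at h
  obtain ⟨rfl, h2⟩ := h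
  rw [eq_of_heq h2]

lemma gr_D (k : ℕ) : Gr (fun e : resBas F.b (k + 1) => e.1) (fun e : resBas F.b k => e.1)
    (resMap (F.D k)) := by
  classical
  intro P f hf e' a ha
  rw [resMap, Finsupp.linearCombination_apply, Finsupp.sum, Finsupp.finset_sum_apply,
    coeff_sum] at ha
  obtain ⟨e, _, h2⟩ := Finset.exists_ne_zero_of_sum_ne_zero ha
  rw [Finsupp.smul_apply, smul_eq_mul, coeff_mul] at h2
  obtain ⟨⟨a1, a2⟩, h3, h4⟩ := Finset.exists_ne_zero_of_sum_ne_zero h2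
  rw [Finset.HasAntidiagonal.mem_antidiagonal] at h3
  have h5 := hf e a1 (left_ne_zero_of_mul h4)
  have h6 := right_ne_zero_of_mul h4
  rcases F.hhom k e e' with h7 | ⟨h7, h8⟩
  · simp [h7] at h6
  · have h9 : a2.degree = e.1 - e'.1 := by
      by_contra h10
      exact h6 (h8.coeff_eq_zero h10)
    dsimp only at h3 h5 ⊢
    have : a.degree + e'.1 = a1.degree + e.1 := by
      rw [← h3, map_add, h9]; omega
    rw [this]; exact h5

lemma min_D (k : ℕ) (f) (hf : f ∈ LinearMap.ker (resMap (F.D k))) (e) : coeff 0 (f e) = 0 := by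
  rw [← F.hexact] at hf
  obtain ⟨g, rfl⟩ := hf
  rw [resMap, Finsupp.linearCombination_apply, Finsupp.sum, Finsupp.finset_sum_apply,
    coeff_sum]
  refine Finset.sum_eq_zero fun e' _ => ?_
  rw [Finsupp.smul_apply, smul_eq_mul]
  change constantCoeff _ = 0
  rw [map_mul]
  simp only [constantCoeff_eq]
  rcases F.hhom (k + 1) e' e with h7 | ⟨h7, h8⟩
  · simp [h7]
  · rw [h8.coeff_eq_zero (by simp; omega), mul_zero]

lemma NF_iff (p : ℕ) : ∀ k j, NF (fun e : resBas F.b k => e.1) (LinearMap.range (resMap (F.D k))) p j ↔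
    F.b (k + p + 1) j ≠ 0 := by
  induction p with
  | zero =>
    intro k j
    have := fin_bas F (k + 1)
    have h1 : (∃ e : resBas F.b (k + 1), e.1 = j) ↔ F.b (k + 0 + 1) j ≠ 0 := by
      constructor
      · rintro ⟨e, rfl⟩ h
        exact (Fin.cast h e.2).elim0
      · intro h
        exact ⟨⟨j, ⟨0, Nat.pos_of_ne_zero h⟩⟩, rfl⟩
    rw [← h1]
    exact ⟨base_down (gr_D F k), base_up (gr_D F k) (min_D F k)⟩
  | succ p ih =>
    intro k j
    have := fin_bas F (k + 1)
    have h1 : k + (p + 1) + 1 = (k + 1) + p + 1 := by omega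
    rw [h1, ← ih (k + 1) j, F.hexact]
    exact ⟨step_down (gr_D F k), step_up (gr_D F k) (min_D F k)⟩

end

lemma monIdeal_mem {K : Type} [Field K] {n q : ℕ} (v : Fin q → Fin n →₀ ℕ)
    (f : MvPolynomial (Fin n) K) :
    f ∈ monIdeal K v ↔ ∀ a, coeff a f ≠ 0 → a ∈ UI v := by
  have : monIdeal K v = Ideal.span ((fun s => monomial s (1 : K)) '' Set.range v) := by
    rw [← Set.range_comp]; rfl
  rw [this, mem_ideal_span_monomial_image]
  simp [UI]

lemma zero_iff {K : Type} [Field K] {n q : ℕ} (v : Fin q → Fin n →₀ ℕ)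
    (F : MinFreeRes K n (monIdeal K v)) (p j : ℕ) :
    NR K (UI v) p j ↔ F.b (p + 1) j ≠ 0 := by
  have h00 : F.b 0 0 = 1 := by simp [F.hb0]
  have h1 := NF_iff F p 0 j
  have hp : 0 + p + 1 = p + 1 := by omega
  rw [hp] at h1
  rw [← h1]
  let e0 : resBas F.b 0 := ⟨0, ⟨0, by rw [h00]; exact one_pos⟩⟩
  have huniq : ∀ e, e = e0 := by
    rintro ⟨a, s⟩
    have ha : a = 0 := by
      by_contra h
      have := F.hb0 a
      rw [if_neg h] at this
      exact (Fin.cast this s).elim0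
    subst ha
    have : s = ⟨0, by rw [h00]; exact one_pos⟩ := by
      apply Fin.ext
      have := s.2
      simp only
      omega
    rw [this]
  have e01 : e0.1 = 0 := rfl
  have := fin_bas F 0
  have hmem : ∀ f, f ∈ LinearMap.range (resMap (F.D 0)) ↔ ∀ a, coeff a (f e0) ≠ 0 → a ∈ UI v := by
    intro f
    rw [F.hexact0, LinearMap.mem_ker, ← monIdeal_mem]
    have hf : f = Finsupp.single e0 (f e0) := by
      ext1 e
      rw [huniq e]; simp
    rw [hf, Finsupp.linearCombination_single]
    simp only [Finsupp.single_eq_same]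
    rw [← Ideal.Quotient.eq_zero_iff_mem]
    refine Eq.congr_left ?_
    exact congrArg (Ideal.Quotient.mk (monIdeal K v)) (mul_one (f e0))
  have hch : ∀ p (c : Finset (Fin n) → (resBas F.b 0 →₀ MvPolynomial (Fin n) K)),
      ((∀ S, c S ∈ LinearMap.range (resMap (F.D 0))) ∧ HC (fun e => e.1) p j c) ↔
      CR (UI v) p j (fun S => c S e0) := by
    intro p c
    simp only [hmem]
    constructor
    · rintro ⟨h2, h3⟩ S a ha
      exact ⟨h2 S a ha, by simpa [e01] using h3 S e0 a ha⟩
    · intro h2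
      refine ⟨fun S a ha => (h2 S a ha).1, fun S e a ha => ?_⟩
      rw [huniq e] at ha ⊢
      simpa [e01] using (h2 S a ha).2
  have hkos : ∀ (c : Finset (Fin n) → (resBas F.b 0 →₀ MvPolynomial (Fin n) K)) S,
      kos (A := MvPolynomial (Fin n) K) X (fun S => c S e0) S
        = kos (A := MvPolynomial (Fin n) K) X c S e0 := by
    intro c S
    exact congrFun (kos_map (A := MvPolynomial (Fin n) K) X
      (Finsupp.lapply (R := MvPolynomial (Fin n) K) e0) c) S
  have hext : ∀ c d : Finset (Fin n) → (resBas F.b 0 →₀ MvPolynomial (Fin n) K),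
      (∀ S, c S e0 = d S e0) → c = d := by
    intro c d h
    funext S
    ext1 e
    rw [huniq e]; exact h S
  constructor
  · rintro ⟨c, h2, h3, h4⟩
    let c' : Finset (Fin n) → (resBas F.b 0 →₀ MvPolynomial (Fin n) K) :=
      fun S => Finsupp.single e0 (c S)
    have hc' : (fun S => c' S e0) = c := by funext S; simp [c']
    obtain ⟨h5, h6⟩ := (hch p c').2 (by rw [hc']; exact h2)
    refine ⟨c', h5, h6, hext _ _ fun S => ?_, fun b hb1 hb2 hb3 => ?_⟩
    · rw [← hkos, hc', h3]; rfl
    · refine h4 _ ((hch _ b).1 ⟨hb1, hb2⟩) ?_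
      funext S
      rw [hkos, hb3, ← hc']
  · rintro ⟨c, h2, h3, h4, h5⟩
    refine ⟨_, (hch _ c).1 ⟨h2, h3⟩, ?_, fun b hb1 hb2 => ?_⟩
    · funext S
      rw [hkos, h4]; rfl
    · let b' : Finset (Fin n) → (resBas F.b 0 →₀ MvPolynomial (Fin n) K) :=
        fun S => Finsupp.single e0 (b S)
      have hb' : (fun S => b' S e0) = b := by funext S; simp [b']
      obtain ⟨h6, h7⟩ := (hch _ b').2 (by rw [hb']; exact hb1)
      refine h5 b' h6 h7 (hext _ _ fun S => ?_)
      rw [← hkos, hb', hb2]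

end SgnReg

/-- **Signature invariants of monomial ideals** (Theorem: regularity).
Let `I` be a monomial ideal of `R = K[x_1,…,x_n]` that is not a principal ideal, with
minimal monomial generating set `G(I) = {x^{v_1},…,x^{v_q}}`.  Then
`reg(R/I) ≥ reg(R/sgn(I))`, where the regularity is computed from (any) minimal graded
free resolution. -/
theorem reg_quot_sgn_le_reg_quot (K : Type) [Field K] (n q : ℕ)
    (v : Fin q → Fin n →₀ ℕ) (hv : AntichainFam v)
    (I : Ideal (MvPolynomial (Fin n) K)) (hI : I = monIdeal K v)
    (hnp : ¬ Submodule.IsPrincipal I)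
    (F : MinFreeRes K n I) (G : MinFreeRes K n (monIdeal K (sgnExp v))) :
    G.reg ≤ F.reg := by
  subst hI
  have hG0 : G.b 0 0 ≠ 0 := by simp [G.hb0]
  have hF0 : F.b 0 0 ≠ 0 := by simp [F.hb0]
  have hbdd : BddAbove { d : ℤ | ∃ k j : ℕ, F.b k j ≠ 0 ∧ d = (j : ℤ) - (k : ℤ) } := by
    refine ((F.hfin.image fun kj : ℕ × ℕ => (kj.2 : ℤ) - (kj.1 : ℤ)).subset ?_).bddAbove
    rintro d ⟨k, j, h, rfl⟩
    exact ⟨(k, j), h, rfl⟩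
  refine csSup_le ⟨_, 0, 0, hG0, rfl⟩ ?_
  rintro d ⟨k, j, h, rfl⟩
  rcases k with _ | p
  · have hj : j = 0 := by
      by_contra hj
      exact h (by rw [G.hb0, if_neg hj])
    subst hj
    exact le_csSup hbdd ⟨0, 0, hF0, rfl⟩
  · rw [← SgnReg.zero_iff] at h
    obtain ⟨j', hj, h'⟩ := SgnReg.transfer v p j h
    rw [SgnReg.zero_iff v F] at h'
    refine le_csSup_of_le hbdd ⟨p + 1, j', h', rfl⟩ ?_
    have : (j : ℤ) ≤ j' := by exact_mod_cast hj
    linarith
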